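/- arXiv:gr-qc/0108068 — 2 statements merged into one kernel-verified Lean document; each statement's English description precedes it below -/
import Mathlib

section
/- Fix an integer p ≥ 3 and ε ∈ (0,1), and set f(N) = ⌊(1−ε)·ln N / ln(p−1)⌋. For G ∈ R_{N,p} and a vertex v, let h_G(v) = (number of edges of the subgraph of G induced on B_G(v, f(N))) − |B_G(v, f(N))| + 1 (the number of independent cycles in the f(N)-ball around v). Then E_N[ (1/N) · Σ_v h_G(v)/|B_G(v, f(N))| ] → 0 as N → ∞ along integers N with p·N even and R_{N,p} nonempty. -/
/-!
Fix a vertex `v` and a radius `r`.  Orient every edge of the `r`-ball away from `v`.  An edge `xy`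
with `dist(v, x) = k` either is the only edge leading from the sphere of radius `k` to the vertex
`y` of the next sphere, or there is a further vertex `x'` of the same sphere which equals `y` or is
adjacent to `y`: a *collision* at level `k`.  Edges of the first kind inject into `B ∖ {v}` by
their far end, so the number of independent cycles is at most the number of collisions at levels
`k ≤ r` (`ballCycleNumber_le`); it is nonnegative because the ball is connected
(`ballCycleNumber_nonneg`).

Since `|B_r| ≥ |B_k|`, it suffices to bound `E[(collisions at level k) / |B_k|]` for each `k ≤ r`.
This is done by switching (`sum_collisions_le`).  Given a collision with edge `xy`, choose an
edge `ab` outside the open `k`-ball and replace `xy, ab` by `xa, yb`.  There are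
`pN - O(|B_k|)` choices of `ab` (`partners_card`), the new graph is again `p`-regular
(`switch_regular`) and has the same `k`-ball (`switch_ball`), while each graph arises in at most
`|B_k|² (p+1) p²` ways (`traces_card`), because `x` and `x'` leave only
`(p+1) p²` choices for `a`, `y` and `b`.  As the weight `1 / |B_k|` is preserved, no conditioning
on the explored part is needed, and the expectation is `O(M / N)` where `M = (r+1) p (p-1)^r` bounds the ball
sizes (`ballF_card_le`).

Summing over the `r + 1` levels gives `O((r+1)² (p-1)^r / N)`, which on the scale
`r ≤ (1-ε) log_{p-1} N` is `O((log N)² N^{-ε})` (`tendsto_scale`).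
-/

open Classical Filter

/-- `u` lies in the ball of radius `r` around `v` in the graph `G`
(`dist_G(v,u) ≤ r`). -/
def InBall {V : Type*} (G : SimpleGraph V) (v : V) (r : ℕ) (u : V) : Prop :=
  ∃ w : G.Walk v u, w.length ≤ r

/-- The set `R_{N,p}` of `p`-regular simple graphs on the vertex set `{0,…,N−1}`. -/
noncomputable def RegGraphs (N p : ℕ) : Finset (SimpleGraph (Fin N)) :=
  Finset.univ.filter fun G => G.IsRegularOfDegree p

/-- Expectation with respect to the uniform probability measure on `R_{N,p}`. -/
noncomputable def regExpectation (N p : ℕ) (X : SimpleGraph (Fin N) → ℝ) : ℝ :=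
  (∑ G ∈ RegGraphs N p, X G) / (RegGraphs N p).card

/-- The number of independent cycles in the `r`-ball of `G` around `v`:
(edges of the induced subgraph on `B_G(v,r)`) − |B_G(v,r)| + 1. -/
noncomputable def ballCycleNumber {V : Type*} (G : SimpleGraph V) (v : V) (r : ℕ) : ℝ :=
  ((G.induce {u | InBall G v r u}).edgeSet.ncard : ℝ)
    - ({u | InBall G v r u}.ncard : ℝ) + 1

/-! ### Balls and spheres -/

lemma inBall_zero {V : Type*} (G : SimpleGraph V) (v u : V) : InBall G v 0 u ↔ u = v := by
  constructor
  · rintro ⟨w, hw⟩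
    exact (SimpleGraph.Walk.eq_of_length_eq_zero (Nat.le_zero.1 hw)).symm
  · rintro rfl
    exact ⟨SimpleGraph.Walk.nil, le_rfl⟩

lemma inBall_mono {V : Type*} {G : SimpleGraph V} {v u : V} {j k : ℕ} (h : j ≤ k)
    (hu : InBall G v j u) : InBall G v k u := by
  obtain ⟨w, hw⟩ := hu
  exact ⟨w, hw.trans h⟩

lemma inBall_step {V : Type*} {G : SimpleGraph V} {v w u : V} {k : ℕ} (hw : InBall G v k w)
    (h : G.Adj w u) : InBall G v (k + 1) u := by
  obtain ⟨q, hq⟩ := hw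
  exact ⟨q.concat h, by rw [SimpleGraph.Walk.length_concat]; omega⟩

lemma inBall_succ {V : Type*} (G : SimpleGraph V) (v u : V) (k : ℕ) :
    InBall G v (k + 1) u ↔ InBall G v k u ∨ ∃ w, InBall G v k w ∧ G.Adj w u := by
  constructor
  · rintro ⟨w, hw⟩
    by_cases h0 : w.length ≤ k
    · exact Or.inl ⟨w, h0⟩
    · have hn : ¬ w.Nil := by
        intro h
        have := SimpleGraph.Walk.length_eq_zero_iff.2 h
        omega
      refine Or.inr ⟨w.penultimate, ⟨w.dropLast, ?_⟩, w.adj_penultimate hn⟩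
      have := w.length_dropLast_add_one hn
      omega
  · rintro (h | ⟨w, hw, ha⟩)
    · exact inBall_mono (Nat.le_succ k) h
    · exact inBall_step hw ha

/-- `u` lies on the sphere of radius `k` around `v`, i.e. `dist_G(v,u) = k`. -/
def OnSphere {V : Type*} (G : SimpleGraph V) (v : V) (k : ℕ) (u : V) : Prop :=
  InBall G v k u ∧ ∀ j < k, ¬ InBall G v j u

lemma exists_onSphere {V : Type*} {G : SimpleGraph V} {v u : V} {r : ℕ}
    (h : InBall G v r u) : ∃ k ≤ r, OnSphere G v k u := by
  have hex : ∃ k, InBall G v k u := ⟨r, h⟩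
  exact ⟨Nat.find hex, Nat.find_min' hex h, Nat.find_spec hex, fun j hj => Nat.find_min hex hj⟩

lemma onSphere_unique {V : Type*} {G : SimpleGraph V} {v u : V} {j k : ℕ}
    (hj : OnSphere G v j u) (hk : OnSphere G v k u) : j = k := by
  rcases lt_trichotomy j k with h | h | h
  · exact absurd hj.1 (hk.2 j h)
  · exact h
  · exact absurd hk.1 (hj.2 k h)

/-- The balls of radius at most `k` are determined by the edges touching the open ball
of radius `k`. -/
lemma inBall_congr {V : Type*} {G G' : SimpleGraph V} {v : V} {k : ℕ}
    (h : ∀ u w, (∃ j < k, InBall G v j u) → (G.Adj u w ↔ G'.Adj u w)) :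
    ∀ j ≤ k, ∀ u, InBall G v j u ↔ InBall G' v j u := by
  intro j
  induction j with
  | zero => intro _ u; simp [inBall_zero]
  | succ j ih =>
    intro hj u
    have ih' := ih (by omega)
    rw [inBall_succ, inBall_succ, ih' u]
    refine or_congr Iff.rfl (exists_congr fun w => ?_)
    rw [← ih' w]
    exact and_congr_right fun hw => h w u ⟨j, by omega, hw⟩

lemma onSphere_congr {V : Type*} {G G' : SimpleGraph V} {v : V} {k : ℕ}
    (h : ∀ j ≤ k, ∀ u, InBall G v j u ↔ InBall G' v j u) (u : V) :
    OnSphere G v k u ↔ OnSphere G' v k u := by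
  unfold OnSphere
  rw [h k le_rfl u]
  exact and_congr_right fun _ => forall₂_congr fun j hj => by rw [h j hj.le u]

/-- The ball of radius `k` around `v`, as a finset. -/
noncomputable def ballF {N : ℕ} (G : SimpleGraph (Fin N)) (v : Fin N) (k : ℕ) : Finset (Fin N) :=
  Finset.univ.filter fun u => InBall G v k u

/-- The sphere of radius `k` around `v`, as a finset. -/
noncomputable def sphF {N : ℕ} (G : SimpleGraph (Fin N)) (v : Fin N) (k : ℕ) : Finset (Fin N) :=
  Finset.univ.filter fun u => OnSphere G v k u

/-- The neighbours of `u`, as a finset. -/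
noncomputable def nbF {N : ℕ} (G : SimpleGraph (Fin N)) (u : Fin N) : Finset (Fin N) :=
  Finset.univ.filter fun w => G.Adj u w

@[simp] lemma mem_ballF {N : ℕ} {G : SimpleGraph (Fin N)} {v : Fin N} {k : ℕ} {u : Fin N} :
    u ∈ ballF G v k ↔ InBall G v k u := by simp [ballF]

@[simp] lemma mem_sphF {N : ℕ} {G : SimpleGraph (Fin N)} {v : Fin N} {k : ℕ} {u : Fin N} :
    u ∈ sphF G v k ↔ OnSphere G v k u := by simp [sphF]

@[simp] lemma mem_nbF {N : ℕ} {G : SimpleGraph (Fin N)} {u w : Fin N} :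
    w ∈ nbF G u ↔ G.Adj u w := by simp [nbF]

lemma mem_RegGraphs {N p : ℕ} {G : SimpleGraph (Fin N)} :
    G ∈ RegGraphs N p ↔ ∀ u, (nbF G u).card = p := by
  have h : ∀ u, nbF G u = G.neighborFinset u := by
    intro u
    ext w
    simp
  unfold RegGraphs
  rw [Finset.mem_filter]
  simp only [Finset.mem_univ, true_and]
  refine forall_congr' fun u => ?_
  rw [h u]
  exact Iff.rfl

lemma ballF_card_pos {N : ℕ} (G : SimpleGraph (Fin N)) (v : Fin N) (k : ℕ) :
    0 < (ballF G v k).card :=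
  Finset.card_pos.2 ⟨v, mem_ballF.2 (inBall_mono (Nat.zero_le k) ((inBall_zero G v v).2 rfl))⟩

lemma ballF_mono {N : ℕ} (G : SimpleGraph (Fin N)) (v : Fin N) {j k : ℕ} (h : j ≤ k) :
    ballF G v j ⊆ ballF G v k := fun _ hu => by
  rw [mem_ballF] at hu ⊢
  exact inBall_mono h hu

/-- Every vertex of a positive sphere has a neighbour on the previous one. -/
lemma onSphere_parent {V : Type*} {G : SimpleGraph V} {v u : V} {k : ℕ}
    (h : OnSphere G v (k + 1) u) : ∃ w, OnSphere G v k w ∧ G.Adj w u := by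
  rcases (inBall_succ G v u k).1 h.1 with h1 | ⟨w, hw, ha⟩
  · exact absurd h1 (h.2 k (Nat.lt_succ_self k))
  · exact ⟨w, ⟨hw, fun j hj hjw => h.2 (j + 1) (by omega) (inBall_step hjw ha)⟩, ha⟩

/-- Spheres grow at most by a factor `p - 1` per step: one neighbour of each vertex is used by
its parent. -/
lemma sphF_card_le {N p : ℕ} {G : SimpleGraph (Fin N)} (hG : G ∈ RegGraphs N p)
    (v : Fin N) (k : ℕ) : (sphF G v (k + 1)).card ≤ p * (p - 1) ^ k := by
  rw [mem_RegGraphs] at hG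
  induction k with
  | zero =>
    have : sphF G v (0 + 1) ⊆ nbF G v := by
      intro u hu
      obtain ⟨w, hw, ha⟩ := onSphere_parent (mem_sphF.1 hu)
      obtain rfl := (inBall_zero G v w).1 hw.1
      exact mem_nbF.2 ha
    simpa [hG v] using Finset.card_le_card this
  | succ k ih =>
    have hsub : sphF G v (k + 1 + 1) ⊆
        (sphF G v (k + 1)).biUnion fun w => (nbF G w) \ (sphF G v k) := by
      intro u hu
      rw [mem_sphF] at hu
      obtain ⟨w, hw, ha⟩ := onSphere_parent hu
      rw [Finset.mem_biUnion]
      refine ⟨w, mem_sphF.2 hw, Finset.mem_sdiff.2 ⟨mem_nbF.2 ha, fun h => ?_⟩⟩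
      have := onSphere_unique (mem_sphF.1 h) hu
      omega
    have hb : ∀ w ∈ sphF G v (k + 1), ((nbF G w) \ (sphF G v k)).card ≤ p - 1 := by
      intro w hw
      obtain ⟨z, hz, ha⟩ := onSphere_parent (mem_sphF.1 hw)
      have hs : (nbF G w) \ (sphF G v k) ⊆ (nbF G w).erase z := by
        intro u hu
        rw [Finset.mem_sdiff] at hu
        refine Finset.mem_erase.2 ⟨?_, hu.1⟩
        rintro rfl
        exact hu.2 (mem_sphF.2 hz)
      have := Finset.card_le_card hs
      rwa [Finset.card_erase_of_mem (mem_nbF.2 ha.symm), hG w] at this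
    calc (sphF G v (k + 1 + 1)).card ≤ (sphF G v (k + 1)).card * (p - 1) :=
          (Finset.card_le_card hsub).trans (Finset.card_biUnion_le_card_mul _ _ _ hb)
      _ ≤ p * (p - 1) ^ k * (p - 1) := Nat.mul_le_mul_right _ ih
      _ = p * (p - 1) ^ (k + 1) := by ring

lemma ballF_card_le {N p : ℕ} (hp : 3 ≤ p) {G : SimpleGraph (Fin N)} (hG : G ∈ RegGraphs N p)
    (v : Fin N) (r : ℕ) : (ballF G v r).card ≤ (r + 1) * (p * (p - 1) ^ r) := by
  have hsub : ballF G v r ⊆ (Finset.range (r + 1)).biUnion fun k => sphF G v k := by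
    intro u hu
    obtain ⟨k, hk, hs⟩ := exists_onSphere (mem_ballF.1 hu)
    exact Finset.mem_biUnion.2 ⟨k, Finset.mem_range.2 (by omega), mem_sphF.2 hs⟩
  refine (Finset.card_le_card hsub).trans ?_
  have := Finset.card_biUnion_le_card_mul (Finset.range (r + 1)) (fun k => sphF G v k)
    (p * (p - 1) ^ r) ?_
  · simpa using this
  · intro k hk
    rw [Finset.mem_range] at hk
    have hp1 : 1 ≤ p - 1 := by omega
    cases k with
    | zero =>
      have h1 : sphF G v 0 ⊆ {v} := by
        intro u hu
        exact Finset.mem_singleton.2 ((inBall_zero G v u).1 (mem_sphF.1 hu).1)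
      have h2 := Finset.card_le_card h1
      rw [Finset.card_singleton] at h2
      exact h2.trans (Nat.mul_pos (by omega) (Nat.pow_pos (by omega)))
    | succ k =>
      exact (sphF_card_le hG v k).trans
        (Nat.mul_le_mul_left _ (Nat.pow_le_pow_right hp1 (by omega)))

/-! ### Independent cycles and collisions -/

/-- The ball is connected, hence has at least as many edges as a spanning tree. -/
lemma ballCycleNumber_nonneg {N : ℕ} (G : SimpleGraph (Fin N)) (v : Fin N) (r : ℕ) :
    0 ≤ ballCycleNumber G v r := by
  have hv : InBall G v r v := inBall_mono (Nat.zero_le r) ((inBall_zero G v v).2 rfl)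
  have hc : (G.induce {u | InBall G v r u}).Connected := by
    refine SimpleGraph.induce_connected_of_patches v hv fun {u} hu => ?_
    obtain ⟨w, hw⟩ := hu
    refine ⟨{z | z ∈ w.support}, ?_, w.start_mem_support, w.end_mem_support, ?_⟩
    · intro z hz
      exact ⟨w.takeUntil z hz, (w.length_takeUntil_le_length hz).trans hw⟩
    · exact w.connected_induce_support.preconnected _ _
  have h := hc.card_vert_le_card_edgeSet_add_one
  unfold ballCycleNumber
  rw [Nat.card_coe_set_eq, Nat.card_coe_set_eq] at h
  have h' : (({u | InBall G v r u}.ncard : ℕ) : ℝ) ≤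
      ((G.induce {u | InBall G v r u}).edgeSet.ncard : ℝ) + 1 := by exact_mod_cast h
  linarith

/-- The configurations that close a cycle at distance `k` from `v`: distinct vertices `x, x'` of
the sphere and an edge `xy` leading away from the open ball, such that `y` is `x'` itself or a
neighbour of `x'`.  The triples are encoded as `(x, x', y)`. -/
noncomputable def collisions {N : ℕ} (G : SimpleGraph (Fin N)) (v : Fin N) (k : ℕ) :
    Finset (Fin N × Fin N × Fin N) :=
  Finset.univ.filter fun t => OnSphere G v k t.1 ∧ OnSphere G v k t.2.1 ∧ t.1 ≠ t.2.1 ∧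
    G.Adj t.1 t.2.2 ∧ (∀ j < k, ¬ InBall G v j t.2.2) ∧ (t.2.2 = t.2.1 ∨ G.Adj t.2.1 t.2.2)

/-- Edges pointing away from `v` that are not part of a collision inject into `B ∖ {v}` by their
far end, so the number of independent cycles is at most the number of collisions. -/
lemma ballCycleNumber_le {N : ℕ} (G : SimpleGraph (Fin N)) (v : Fin N) (r : ℕ) :
    ballCycleNumber G v r ≤ ∑ k ∈ Finset.range (r + 1), ((collisions G v k).card : ℝ) := by
  set E : Finset (Fin N × Fin N) := Finset.univ.filter fun q => G.Adj q.1 q.2 ∧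
    InBall G v r q.2 ∧ ∃ k ≤ r, OnSphere G v k q.1 ∧ ∀ j < k, ¬ InBall G v j q.2 with hE
  set C : Finset (Fin N × Fin N) := (Finset.range (r + 1)).biUnion fun k =>
    (collisions G v k).image fun t => (t.1, t.2.2) with hC
  have hCcard : C.card ≤ ∑ k ∈ Finset.range (r + 1), (collisions G v k).card :=
    Finset.card_biUnion_le.trans (Finset.sum_le_sum fun k _ => Finset.card_image_le)
  have hmemC : ∀ k ≤ r, ∀ x x' y, OnSphere G v k x → OnSphere G v k x' → x ≠ x' → G.Adj x y →
      (∀ j < k, ¬ InBall G v j y) → (y = x' ∨ G.Adj x' y) → (x, y) ∈ C := by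
    intro k hk x x' y h1 h2 h3 h4 h5 h6
    refine Finset.mem_biUnion.2 ⟨k, Finset.mem_range.2 (by omega), Finset.mem_image.2
      ⟨(x, x', y), ?_, rfl⟩⟩
    simp only [collisions, Finset.mem_filter, Finset.mem_univ, true_and]
    exact ⟨h1, h2, h3, h4, h5, h6⟩
  -- an edge outside `C` joins consecutive spheres
  have hgood : ∀ q ∈ E \ C, ∃ k ≤ r, OnSphere G v k q.1 ∧ OnSphere G v (k + 1) q.2 ∧
      G.Adj q.1 q.2 := by
    intro q hq
    rw [Finset.mem_sdiff] at hq
    obtain ⟨hq, hqC⟩ := hq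
    simp only [hE, Finset.mem_filter, Finset.mem_univ, true_and] at hq
    obtain ⟨ha, hb, k, hk, hs, hn⟩ := hq
    refine ⟨k, hk, hs, ⟨inBall_step hs.1 ha, fun j hj hjq => ?_⟩, ha⟩
    rcases Nat.lt_succ_iff_lt_or_eq.1 hj with h | rfl
    · exact hn j h hjq
    · exact hqC (hmemC j hk q.1 q.2 q.2 hs ⟨hjq, hn⟩ ha.ne ha hn (Or.inl rfl))
  have hinj : Set.InjOn (Prod.snd : Fin N × Fin N → Fin N) (E \ C : Finset (Fin N × Fin N)) := by
    intro q hq q' hq' hqq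
    obtain ⟨k, hk, h1, h2, h3⟩ := hgood q hq
    obtain ⟨k', hk', h1', h2', h3'⟩ := hgood q' hq'
    have hkk : k = k' := by
      have := onSphere_unique h2 (hqq ▸ h2')
      omega
    subst hkk
    by_contra hne
    have hne1 : q.1 ≠ q'.1 := fun h => hne (Prod.ext h hqq)
    have hq := (Finset.mem_sdiff.1 (Finset.mem_coe.1 hq)).2
    refine hq (hmemC k hk q.1 q'.1 q.2 h1 h1' hne1 h3
      (fun j hj => h2.2 j (by omega)) (Or.inr ?_))
    rw [hqq]
    exact h3'
  have hEC : (E \ C).card ≤ ((ballF G v r).erase v).card := by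
    refine Finset.card_le_card_of_injOn Prod.snd ?_ hinj
    intro q hq
    obtain ⟨k, hk, h1, h2, h3⟩ := hgood q hq
    have hqE := (Finset.mem_sdiff.1 (Finset.mem_coe.1 hq)).1
    simp only [hE, Finset.mem_filter, Finset.mem_univ, true_and] at hqE
    refine Finset.mem_coe.2 (Finset.mem_erase.2 ⟨?_, mem_ballF.2 hqE.2.1⟩)
    intro h
    exact h2.2 0 (Nat.succ_pos k) ((inBall_zero G v _).2 h)
  rw [Finset.card_erase_of_mem (mem_ballF.2 (inBall_mono (Nat.zero_le r)
    ((inBall_zero G v v).2 rfl)))] at hEC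
  have hpos := ballF_card_pos G v r
  have hEle : E.card ≤ (E \ C).card + C.card := by
    exact Finset.card_le_card_sdiff_add_card
  -- every edge of the ball can be oriented away from `v`
  have hedge : (G.induce {u | InBall G v r u}).edgeSet.ncard ≤ E.card := by
    have hinjm : Function.Injective
        (Sym2.map (Subtype.val : {u | InBall G v r u} → Fin N)) :=
      Sym2.map.injective Subtype.val_injective
    rw [← Set.ncard_image_of_injective _ hinjm]
    have hsub : (Sym2.map (Subtype.val : {u | InBall G v r u} → Fin N)) ''
        (G.induce {u | InBall G v r u}).edgeSet ⊆
        ((E.image fun q => s(q.1, q.2) : Finset (Sym2 (Fin N))) : Set (Sym2 (Fin N))) := by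
      rintro _ ⟨e, he, rfl⟩
      induction e with
      | _ a b =>
      rw [SimpleGraph.mem_edgeSet, SimpleGraph.comap_adj] at he
      have hab : G.Adj a.1 b.1 := he
      rw [Finset.mem_coe, Finset.mem_image]
      obtain ⟨i, hi, hia⟩ := exists_onSphere a.2
      obtain ⟨j, hj, hjb⟩ := exists_onSphere b.2
      rcases le_total i j with h | h
      · refine ⟨(a.1, b.1), ?_, by simp⟩
        simp only [hE, Finset.mem_filter, Finset.mem_univ, true_and]
        exact ⟨hab, b.2, i, hi, hia, fun l hl => hjb.2 l (by omega)⟩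
      · refine ⟨(b.1, a.1), ?_, by simp [Sym2.eq_swap]⟩
        simp only [hE, Finset.mem_filter, Finset.mem_univ, true_and]
        exact ⟨hab.symm, a.2, j, hj, hjb, fun l hl => hia.2 l (by omega)⟩
    refine (Set.ncard_le_ncard hsub (Finset.finite_toSet _)).trans ?_
    rw [Set.ncard_coe_finset]
    exact Finset.card_image_le
  have hball : {u | InBall G v r u}.ncard = (ballF G v r).card := by
    rw [← Set.ncard_coe_finset]
    congr 1
    ext u
    simp
  unfold ballCycleNumber
  rw [hball]
  have hfin : (G.induce {u | InBall G v r u}).edgeSet.ncard + 1 ≤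
      (ballF G v r).card + ∑ k ∈ Finset.range (r + 1), (collisions G v k).card := by omega
  have : ((G.induce {u | InBall G v r u}).edgeSet.ncard : ℝ) + 1 ≤
      ((ballF G v r).card : ℝ) + ∑ k ∈ Finset.range (r + 1), ((collisions G v k).card : ℝ) := by
    exact_mod_cast hfin
  linarith

/-! ### Switchings -/

/-- The four pairs `xy, ab, xa, yb` toggled by the switching. -/
def swPairs {N : ℕ} (x y a b : Fin N) : SimpleGraph (Fin N) :=
  SimpleGraph.fromEdgeSet {s(x, y), s(a, b), s(x, a), s(y, b)}

/-- The switching: toggling the four pairs of the `4`-cycle `x y b a`.  When `xy, ab` are edges and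
`xa, yb` are not, this replaces the former by the latter. -/
noncomputable def switch {N : ℕ} (G : SimpleGraph (Fin N)) (x y a b : Fin N) :
    SimpleGraph (Fin N) := symmDiff G (swPairs x y a b)

lemma switch_switch {N : ℕ} (G : SimpleGraph (Fin N)) (x y a b : Fin N) :
    switch (switch G x y a b) x y a b = G := by
  unfold switch
  exact symmDiff_symmDiff_cancel_right _ _

lemma switch_adj {N : ℕ} (G : SimpleGraph (Fin N)) (x y a b u w : Fin N) :
    (switch G x y a b).Adj u w ↔
      (G.Adj u w ∧ ¬ (swPairs x y a b).Adj u w) ∨ ((swPairs x y a b).Adj u w ∧ ¬ G.Adj u w) := by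
  simp [switch, symmDiff]

lemma swPairs_adj {N : ℕ} (x y a b u w : Fin N) :
    (swPairs x y a b).Adj u w ↔ ((u = x ∧ w = y ∨ u = y ∧ w = x) ∨ (u = a ∧ w = b ∨ u = b ∧ w = a)
      ∨ (u = x ∧ w = a ∨ u = a ∧ w = x) ∨ (u = y ∧ w = b ∨ u = b ∧ w = y)) ∧ u ≠ w := by
  simp [swPairs]

/-- The edge `ab` can be switched against the edge `xy`. -/
structure Switchable {N : ℕ} (G : SimpleGraph (Fin N)) (x y a b : Fin N) : Prop where
  xy : G.Adj x y
  ab : G.Adj a b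
  ax : a ≠ x
  yb : b ≠ y
  nxa : ¬ G.Adj x a
  nyb : ¬ G.Adj y b

lemma Switchable.ay {N : ℕ} {G : SimpleGraph (Fin N)} {x y a b : Fin N}
    (h : Switchable G x y a b) : a ≠ y := by
  rintro rfl
  exact h.nxa h.xy

lemma Switchable.bx {N : ℕ} {G : SimpleGraph (Fin N)} {x y a b : Fin N}
    (h : Switchable G x y a b) : b ≠ x := by
  rintro rfl
  exact h.nyb h.xy.symm

lemma card_nbF_replace {N : ℕ} {G G' : SimpleGraph (Fin N)} {u c d : Fin N}
    (hc : G.Adj u c) (hd : ¬ G.Adj u d)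
    (h : ∀ w, G'.Adj u w ↔ w = d ∨ (w ≠ c ∧ G.Adj u w)) : (nbF G' u).card = (nbF G u).card := by
  have : nbF G' u = insert d ((nbF G u).erase c) := by
    ext w
    simp [h w]
  rw [this, Finset.card_insert_of_notMem, Finset.card_erase_add_one (mem_nbF.2 hc)]
  simp [hd]

lemma switch_regular {N p : ℕ} {G : SimpleGraph (Fin N)} {x y a b : Fin N}
    (h : Switchable G x y a b) (hG : G ∈ RegGraphs N p) : switch G x y a b ∈ RegGraphs N p := by
  rw [mem_RegGraphs] at hG ⊢
  intro u
  rw [← hG u]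
  obtain ⟨hxy, hab, hax, hyb, hnxa, hnyb⟩ := id h
  have hay := h.ay
  have hbx := h.bx
  have nxy := hxy.ne
  have nab := hab.ne
  have hyx := hxy.symm
  have hba := hab.symm
  have hnax : ¬ G.Adj a x := fun h => hnxa h.symm
  have hnby : ¬ G.Adj b y := fun h => hnyb h.symm
  by_cases h1 : u = x
  · subst h1
    refine card_nbF_replace hxy hnxa fun w => ?_
    rw [switch_adj, swPairs_adj]
    grind
  by_cases h2 : u = y
  · subst h2
    refine card_nbF_replace hxy.symm hnyb fun w => ?_
    rw [switch_adj, swPairs_adj]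
    grind
  by_cases h3 : u = a
  · subst h3
    refine card_nbF_replace hab hnax fun w => ?_
    rw [switch_adj, swPairs_adj]
    grind
  by_cases h4 : u = b
  · subst h4
    refine card_nbF_replace hab.symm hnby fun w => ?_
    rw [switch_adj, swPairs_adj]
    grind
  congr 1
  ext w
  rw [mem_nbF, mem_nbF, switch_adj, swPairs_adj]
  grind

lemma card_filter_adj_fst {N p : ℕ} {G : SimpleGraph (Fin N)} (hG : G ∈ RegGraphs N p)
    (Z : Finset (Fin N)) :
    (Finset.univ.filter fun q : Fin N × Fin N => q.1 ∈ Z ∧ G.Adj q.1 q.2).card = Z.card * p := by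
  rw [mem_RegGraphs] at hG
  have : (Finset.univ.filter fun q : Fin N × Fin N => q.1 ∈ Z ∧ G.Adj q.1 q.2).card =
      (Z.sigma fun u => nbF G u).card := by
    refine Finset.card_bij' (fun q _ => ⟨q.1, q.2⟩) (fun s _ => (s.1, s.2)) ?_ ?_ ?_ ?_ <;> simp
  rw [this, Finset.card_sigma, Finset.sum_congr rfl fun u _ => hG u]
  simp

lemma card_filter_adj_snd {N p : ℕ} {G : SimpleGraph (Fin N)} (hG : G ∈ RegGraphs N p)
    (Z : Finset (Fin N)) :
    (Finset.univ.filter fun q : Fin N × Fin N => q.2 ∈ Z ∧ G.Adj q.1 q.2).card = Z.card * p := by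
  rw [← card_filter_adj_fst hG Z]
  refine Finset.card_bij' (fun q _ => (q.2, q.1)) (fun s _ => (s.2, s.1)) ?_ ?_ ?_ ?_ <;>
    simp [G.adj_comm]

/-- The open ball of radius `k` around `v`. -/
noncomputable def oballF {N : ℕ} (G : SimpleGraph (Fin N)) (v : Fin N) (k : ℕ) :
    Finset (Fin N) := Finset.univ.filter fun u => ∃ j < k, InBall G v j u

@[simp] lemma mem_oballF {N : ℕ} {G : SimpleGraph (Fin N)} {v : Fin N} {k : ℕ} {u : Fin N} :
    u ∈ oballF G v k ↔ ∃ j < k, InBall G v j u := by simp [oballF]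

/-- The edges `ab`, avoiding the open ball of radius `k`, available for switching
against `xy`. -/
noncomputable def partners {N : ℕ} (G : SimpleGraph (Fin N)) (v : Fin N) (k : ℕ) (x y : Fin N) :
    Finset (Fin N × Fin N) :=
  Finset.univ.filter fun q => Switchable G x y q.1 q.2 ∧ q.1 ∉ oballF G v k ∧ q.2 ∉ oballF G v k

/-- All but a bounded multiple of the ball size of the `pN` oriented edges are available. -/
lemma partners_card {N p : ℕ} {G : SimpleGraph (Fin N)} (hG : G ∈ RegGraphs N p) (v : Fin N)
    (k : ℕ) {x y : Fin N} (hxy : G.Adj x y) :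
    N * p ≤ (partners G v k x y).card + 2 * (((ballF G v k).card + p + 1) * p) := by
  set Z : Fin N → Finset (Fin N) := fun z => insert z (oballF G v k ∪ nbF G z) with hZ
  have hob : (oballF G v k).card ≤ (ballF G v k).card := by
    refine Finset.card_le_card fun u hu => ?_
    obtain ⟨j, hj, h⟩ := mem_oballF.1 hu
    exact mem_ballF.2 (inBall_mono hj.le h)
  have hZc : ∀ z, (Z z).card * p ≤ ((ballF G v k).card + p + 1) * p := by
    intro z
    refine Nat.mul_le_mul_right _ ?_
    refine (Finset.card_insert_le _ _).trans ?_
    have := Finset.card_union_le (oballF G v k) (nbF G z)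
    rw [mem_RegGraphs.1 hG z] at this
    omega
  have hsub : (Finset.univ.filter fun q : Fin N × Fin N => q.1 ∈ Finset.univ ∧ G.Adj q.1 q.2) ⊆
      partners G v k x y ∪
      ((Finset.univ.filter fun q : Fin N × Fin N => q.1 ∈ Z x ∧ G.Adj q.1 q.2) ∪
      (Finset.univ.filter fun q : Fin N × Fin N => q.2 ∈ Z y ∧ G.Adj q.1 q.2)) := by
    intro q hq
    simp only [Finset.mem_filter, Finset.mem_univ, true_and] at hq
    by_cases h1 : q.1 ∈ Z x
    · simp [h1, hq]
    by_cases h2 : q.2 ∈ Z y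
    · simp [h2, hq]
    refine Finset.mem_union_left _ ?_
    simp only [partners, Finset.mem_filter, Finset.mem_univ, true_and]
    simp only [hZ, Finset.mem_insert, Finset.mem_union, not_or, mem_nbF] at h1 h2
    exact ⟨⟨hxy, hq, h1.1, h2.1, h1.2.2, h2.2.2⟩, h1.2.1, h2.2.1⟩
  have h := (Finset.card_le_card hsub).trans ((Finset.card_union_le _ _).trans
    (Nat.add_le_add_left (Finset.card_union_le _ _) _))
  rw [card_filter_adj_fst hG, card_filter_adj_fst hG, card_filter_adj_snd hG] at h
  have hx := hZc x
  have hy := hZc y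
  rw [Finset.card_univ, Fintype.card_fin] at h
  omega

/-- Switching away from the open ball of radius `k` does not affect the balls of radius at most
`k`. -/
lemma switch_ball {N : ℕ} {G : SimpleGraph (Fin N)} {v : Fin N} {k : ℕ} {x y a b : Fin N}
    (hx : x ∉ oballF G v k) (hy : y ∉ oballF G v k) (ha : a ∉ oballF G v k)
    (hb : b ∉ oballF G v k) :
    ∀ j ≤ k, ∀ u, InBall G v j u ↔ InBall (switch G x y a b) v j u := by
  refine inBall_congr fun u w hu => ?_
  rw [← mem_oballF] at hu
  have : ¬ (swPairs x y a b).Adj u w := by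
    rw [swPairs_adj]
    rintro ⟨h, -⟩
    rcases h with (⟨rfl, -⟩ | ⟨rfl, -⟩) | (⟨rfl, -⟩ | ⟨rfl, -⟩) | (⟨rfl, -⟩ | ⟨rfl, -⟩) |
      (⟨rfl, -⟩ | ⟨rfl, -⟩) <;> contradiction
  rw [switch_adj]
  simp [this]

/-- The traces left by switchings in the new graph: vertices `x, x'` of the ball, `a ∼ x`,
`y = x'` or `y ∼ x'`, and `b ∼ y`, encoded as `((x, x', y), (a, b))`. -/
noncomputable def traces {N : ℕ} (G : SimpleGraph (Fin N)) (v : Fin N) (k : ℕ) :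
    Finset ((Fin N × Fin N × Fin N) × (Fin N × Fin N)) :=
  Finset.univ.filter fun t => t.1.1 ∈ ballF G v k ∧ t.1.2.1 ∈ ballF G v k ∧
    t.1.2.2 ∈ insert t.1.2.1 (nbF G t.1.2.1) ∧ t.2.1 ∈ nbF G t.1.1 ∧ t.2.2 ∈ nbF G t.1.2.2

lemma traces_card {N p : ℕ} {G : SimpleGraph (Fin N)} (hG : G ∈ RegGraphs N p) (v : Fin N)
    (k : ℕ) : (traces G v k).card ≤ (ballF G v k).card ^ 2 * ((p + 1) * p ^ 2) := by
  have hsub : traces G v k ⊆ (ballF G v k).biUnion fun x => (ballF G v k).biUnion fun x' =>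
      (insert x' (nbF G x')).biUnion fun y => ((nbF G x) ×ˢ (nbF G y)).image fun q =>
        ((x, x', y), q) := by
    rintro ⟨⟨x, x', y⟩, ⟨a, b⟩⟩ ht
    simp only [traces, Finset.mem_filter, Finset.mem_univ, true_and] at ht
    obtain ⟨h1, h2, h3, h4, h5⟩ := ht
    exact Finset.mem_biUnion.2 ⟨x, h1, Finset.mem_biUnion.2 ⟨x', h2, Finset.mem_biUnion.2 ⟨y, h3,
      Finset.mem_image.2 ⟨(a, b), Finset.mem_product.2 ⟨h4, h5⟩, rfl⟩⟩⟩⟩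
  rw [mem_RegGraphs] at hG
  have : (traces G v k).card ≤ (ballF G v k).card * ((ballF G v k).card * ((p + 1) * (p * p))) := by
    refine (Finset.card_le_card hsub).trans (Finset.card_biUnion_le_card_mul _ _ _ fun x _ =>
      Finset.card_biUnion_le_card_mul _ _ _ fun x' _ => ?_)
    refine (Finset.card_biUnion_le_card_mul _ _ (p * p) fun y _ => ?_).trans
      (Nat.mul_le_mul_right _ ?_)
    · refine Finset.card_image_le.trans ?_
      rw [Finset.card_product, hG, hG]
    · refine (Finset.card_insert_le _ _).trans ?_
      rw [hG]
  exact this.trans (le_of_eq (by ring))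

/-- A switched collision leaves a trace. -/
lemma switch_trace {N : ℕ} {G : SimpleGraph (Fin N)} {v : Fin N} {k : ℕ} {x x' y a b : Fin N}
    (ht : (x, x', y) ∈ collisions G v k) (hq : (a, b) ∈ partners G v k x y) :
    (∀ j ≤ k, ∀ u, InBall G v j u ↔ InBall (switch G x y a b) v j u) ∧
      ((x, x', y), (a, b)) ∈ traces (switch G x y a b) v k := by
  simp only [collisions, Finset.mem_filter, Finset.mem_univ, true_and] at ht
  simp only [partners, Finset.mem_filter, Finset.mem_univ, true_and] at hq
  obtain ⟨h1, h2, h3, h4, h5, h6⟩ := ht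
  obtain ⟨hs, ha, hb⟩ := hq
  have hball := switch_ball (G := G) (v := v) (k := k) (x := x) (y := y)
    (by simpa using h1.2) (by simpa using h5) ha hb
  refine ⟨hball, ?_⟩
  obtain ⟨hxy, hab, hax, hyb, hnxa, hnyb⟩ := id hs
  have hay := hs.ay
  have hbx := hs.bx
  have nxy := hxy.ne
  have nab := hab.ne
  simp only [traces, Finset.mem_filter, Finset.mem_univ, true_and, mem_ballF, Finset.mem_insert,
    mem_nbF]
  refine ⟨(hball k le_rfl x).1 h1.1, (hball k le_rfl x').1 h2.1, ?_, ?_, ?_⟩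
  · refine h6.imp id fun h => ?_
    rw [switch_adj, swPairs_adj]
    have hx'y := h.ne
    have : x' ≠ b := by
      rintro rfl
      exact hnyb h.symm
    grind
  · rw [switch_adj, swPairs_adj]
    grind
  · rw [switch_adj, swPairs_adj]
    grind

/-! ### The switching estimate -/

/-- The switching estimate: weighted by the inverse ball size, which switching preserves, the
total number of collisions is at most of order `|R_{N,p}| M / N`, where `M` bounds the ball
sizes. -/
lemma sum_collisions_le {N p : ℕ} (v : Fin N) (k : ℕ) (M : ℝ)
    (hM : ∀ G ∈ RegGraphs N p, ((ballF G v k).card : ℝ) ≤ M) :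
    (∑ G ∈ RegGraphs N p, ((collisions G v k).card : ℝ) / (ballF G v k).card) *
      (N * p - 2 * ((M + p + 1) * p)) ≤ (RegGraphs N p).card * (M * ((p + 1) * p ^ 2)) := by
  set P : Finset ((G : SimpleGraph (Fin N)) × ((Fin N × Fin N × Fin N) × (Fin N × Fin N))) :=
    (RegGraphs N p).sigma fun G => Finset.univ.filter fun t =>
      t.1 ∈ collisions G v k ∧ t.2 ∈ partners G v k t.1.1 t.1.2.2 with hP
  set Q : Finset ((G : SimpleGraph (Fin N)) × ((Fin N × Fin N × Fin N) × (Fin N × Fin N))) :=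
    (RegGraphs N p).sigma fun G => traces G v k with hQ
  have hlow : ∀ G ∈ RegGraphs N p,
      ((collisions G v k).card : ℝ) * (N * p - 2 * ((M + p + 1) * p)) ≤
      ((Finset.univ.filter fun t : (Fin N × Fin N × Fin N) × (Fin N × Fin N) =>
      t.1 ∈ collisions G v k ∧ t.2 ∈ partners G v k t.1.1 t.1.2.2).card : ℝ) := by
    intro G hG
    have hcard : (Finset.univ.filter fun t : (Fin N × Fin N × Fin N) × (Fin N × Fin N) =>
        t.1 ∈ collisions G v k ∧ t.2 ∈ partners G v k t.1.1 t.1.2.2).card =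
        ((collisions G v k).sigma fun t => partners G v k t.1 t.2.2).card := by
      refine Finset.card_bij' (fun q _ => ⟨q.1, q.2⟩) (fun s _ => (s.1, s.2)) ?_ ?_ ?_ ?_ <;> simp
    rw [hcard, Finset.card_sigma, Nat.cast_sum, ← nsmul_eq_mul]
    refine Finset.card_nsmul_le_sum _ _ _ fun t ht => ?_
    simp only [collisions, Finset.mem_filter, Finset.mem_univ, true_and] at ht
    have h1 : ((N * p : ℕ) : ℝ) ≤ _ := Nat.cast_le.2 (partners_card hG v k ht.2.2.2.1)
    push_cast at h1
    have h2 : (((ballF G v k).card : ℝ) + p + 1) * p ≤ (M + p + 1) * p :=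
      mul_le_mul_of_nonneg_right (by linarith [hM G hG]) (Nat.cast_nonneg p)
    linarith
  have hkey : ∑ s ∈ P, (1 : ℝ) / (ballF s.1 v k).card ≤ ∑ s ∈ Q, (1 : ℝ) / (ballF s.1 v k).card := by
    have hmem : ∀ s ∈ P, (∀ j ≤ k, ∀ u, InBall s.1 v j u ↔
        InBall (switch s.1 s.2.1.1 s.2.1.2.2 s.2.2.1 s.2.2.2) v j u) ∧
        (⟨switch s.1 s.2.1.1 s.2.1.2.2 s.2.2.1 s.2.2.2, s.2⟩ :
          (G : SimpleGraph (Fin N)) × ((Fin N × Fin N × Fin N) × (Fin N × Fin N))) ∈ Q := by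
      rintro ⟨G, ⟨x, x', y⟩, ⟨a, b⟩⟩ hs
      rw [hP, Finset.mem_sigma, Finset.mem_filter] at hs
      obtain ⟨hG, -, h1, h2⟩ := hs
      have h3 := switch_trace h1 h2
      refine ⟨h3.1, Finset.mem_sigma.2 ⟨?_, h3.2⟩⟩
      simp only [partners, Finset.mem_filter, Finset.mem_univ, true_and] at h2
      exact switch_regular h2.1 hG
    have hinj : Set.InjOn (fun s : (G : SimpleGraph (Fin N)) ×
        ((Fin N × Fin N × Fin N) × (Fin N × Fin N)) =>
        (⟨switch s.1 s.2.1.1 s.2.1.2.2 s.2.2.1 s.2.2.2, s.2⟩ :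
          (G : SimpleGraph (Fin N)) × ((Fin N × Fin N × Fin N) × (Fin N × Fin N)))) P := by
      rintro ⟨G, t⟩ - ⟨G', t'⟩ - h
      simp only [Sigma.mk.injEq, heq_eq_eq] at h
      obtain ⟨h, rfl⟩ := h
      have := congrArg (fun K => switch K t.1.1 t.1.2.2 t.2.1 t.2.2) h
      simp only [switch_switch] at this
      rw [this]
    calc ∑ s ∈ P, (1 : ℝ) / (ballF s.1 v k).card
        = ∑ s ∈ P, (1 : ℝ) /
          (ballF (switch s.1 s.2.1.1 s.2.1.2.2 s.2.2.1 s.2.2.2) v k).card := by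
          refine Finset.sum_congr rfl fun s hs => ?_
          have : ballF s.1 v k = ballF (switch s.1 s.2.1.1 s.2.1.2.2 s.2.2.1 s.2.2.2) v k := by
            ext u
            simp only [mem_ballF]
            exact (hmem s hs).1 k le_rfl u
          rw [this]
      _ = ∑ s ∈ P.image (fun s => (⟨switch s.1 s.2.1.1 s.2.1.2.2 s.2.2.1 s.2.2.2, s.2⟩ :
          (G : SimpleGraph (Fin N)) × ((Fin N × Fin N × Fin N) × (Fin N × Fin N)))),
          (1 : ℝ) / (ballF s.1 v k).card := by
          rw [Finset.sum_image hinj]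
      _ ≤ _ := by
          refine Finset.sum_le_sum_of_subset_of_nonneg ?_ fun _ _ _ => by positivity
          intro s hs
          obtain ⟨s', hs', rfl⟩ := Finset.mem_image.1 hs
          exact (hmem s' hs').2
  rw [hP, hQ, Finset.sum_sigma, Finset.sum_sigma] at hkey
  simp only [Finset.sum_const, nsmul_eq_mul] at hkey
  rw [Finset.sum_mul]
  refine (Finset.sum_le_sum fun G hG => ?_).trans (hkey.trans
    ((Finset.sum_le_sum (g := fun _ => M * ((p + 1) * (p : ℝ) ^ 2)) fun G hG => ?_).trans ?_))
  · rw [div_mul_eq_mul_div, ← mul_div_assoc, mul_one]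
    exact div_le_div_of_nonneg_right (hlow G hG) (Nat.cast_nonneg _)
  · have hpos : (0 : ℝ) < (ballF G v k).card := by exact_mod_cast ballF_card_pos G v k
    have h1 : ((traces G v k).card : ℝ) ≤ _ := Nat.cast_le.2 (traces_card hG v k)
    push_cast at h1
    rw [← mul_div_assoc, mul_one, div_le_iff₀ hpos]
    refine h1.trans ?_
    have h2 := mul_le_mul_of_nonneg_right (hM G hG)
      (by positivity : (0 : ℝ) ≤ (ballF G v k).card * ((p + 1) * (p : ℝ) ^ 2))
    calc _ = _ := ?_
      _ ≤ _ := h2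
      _ = _ := ?_
    · ring
    · ring
  · simp

/-! ### The finite-size bound and its asymptotics -/

lemma ball_ncard {N : ℕ} (G : SimpleGraph (Fin N)) (v : Fin N) (r : ℕ) :
    {u | InBall G v r u}.ncard = (ballF G v r).card := by
  rw [← Set.ncard_coe_finset]
  congr 1
  ext u
  simp

lemma regExpectation_nonneg {N : ℕ} (p r : ℕ) :
    0 ≤ regExpectation N p (fun G => (1 / (N : ℝ)) * ∑ v : Fin N,
      ballCycleNumber G v r / ({u | InBall G v r u}.ncard : ℝ)) :=
  div_nonneg (Finset.sum_nonneg fun G _ => mul_nonneg (by positivity) (Finset.sum_nonneg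
    fun v _ => div_nonneg (ballCycleNumber_nonneg G v r) (Nat.cast_nonneg _))) (Nat.cast_nonneg _)

/-- The finite-size bound.  Since balls grow with the radius, `collisions / |B_r|` is at most
`collisions / |B_k|` for each level `k ≤ r`, to which the switching estimate applies. -/
lemma regExpectation_le {N p r : ℕ} (hp : 3 ≤ p) (M : ℝ)
    (hM : M = (r + 1) * (p * ((p : ℝ) - 1) ^ r)) (hD : 0 < N * p - 2 * ((M + p + 1) * p)) :
    regExpectation N p (fun G => (1 / (N : ℝ)) * ∑ v : Fin N,
      ballCycleNumber G v r / ({u | InBall G v r u}.ncard : ℝ)) ≤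
      (r + 1) * (M * ((p + 1) * (p : ℝ) ^ 2)) / (N * p - 2 * ((M + p + 1) * p)) := by
  have hp1 : (0 : ℝ) ≤ (p : ℝ) - 1 := by
    have : (3 : ℝ) ≤ p := by exact_mod_cast hp
    linarith
  have hM0 : 0 ≤ M := by
    rw [hM]
    positivity
  set D : ℝ := N * p - 2 * ((M + p + 1) * p) with hDdef
  set c : ℝ := (p + 1) * (p : ℝ) ^ 2 with hc
  have hc0 : 0 ≤ c := by positivity
  have hball : ∀ v : Fin N, ∀ k ≤ r, ∀ G ∈ RegGraphs N p, ((ballF G v k).card : ℝ) ≤ M := by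
    intro v k hk G hG
    have h := (Finset.card_le_card (ballF_mono G v hk)).trans (ballF_card_le hp hG v r)
    have h' : ((ballF G v k).card : ℝ) ≤ _ := Nat.cast_le.2 h
    push_cast [Nat.cast_sub (show 1 ≤ p by omega)] at h'
    rw [hM]
    exact h'
  have hsw : ∀ v : Fin N, ∀ k ∈ Finset.range (r + 1),
      ∑ G ∈ RegGraphs N p, ((collisions G v k).card : ℝ) / (ballF G v k).card ≤
        (RegGraphs N p).card * (M * c) / D := by
    intro v k hk
    rw [Finset.mem_range] at hk
    rw [le_div_iff₀ hD]
    exact sum_collisions_le v k M (hball v k (by omega))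
  have hpt : ∀ G, ∀ v : Fin N, ballCycleNumber G v r / ({u | InBall G v r u}.ncard : ℝ) ≤
      ∑ k ∈ Finset.range (r + 1), ((collisions G v k).card : ℝ) / (ballF G v k).card := by
    intro G v
    rw [ball_ncard]
    refine (div_le_div_of_nonneg_right (ballCycleNumber_le G v r) (Nat.cast_nonneg _)).trans ?_
    rw [Finset.sum_div]
    refine Finset.sum_le_sum fun k hk => ?_
    rw [Finset.mem_range] at hk
    refine div_le_div_of_nonneg_left (Nat.cast_nonneg _) ?_ ?_
    · exact_mod_cast ballF_card_pos G v k
    · exact_mod_cast Finset.card_le_card (ballF_mono G v (show k ≤ r by omega))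
  have hsum : ∑ G ∈ RegGraphs N p, (1 / (N : ℝ)) * ∑ v : Fin N,
      ballCycleNumber G v r / ({u | InBall G v r u}.ncard : ℝ) ≤
      ((r + 1) * (M * c) / D) * (RegGraphs N p).card := by
    calc _ ≤ ∑ G ∈ RegGraphs N p, (1 / (N : ℝ)) * ∑ v : Fin N, ∑ k ∈ Finset.range (r + 1),
          ((collisions G v k).card : ℝ) / (ballF G v k).card :=
          Finset.sum_le_sum fun G _ => mul_le_mul_of_nonneg_left
            (Finset.sum_le_sum fun v _ => hpt G v) (by positivity)
      _ = (1 / (N : ℝ)) * ∑ v : Fin N, ∑ k ∈ Finset.range (r + 1), ∑ G ∈ RegGraphs N p,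
          ((collisions G v k).card : ℝ) / (ballF G v k).card := by
          rw [← Finset.mul_sum, Finset.sum_comm]
          congr 1
          exact Finset.sum_congr rfl fun v _ => Finset.sum_comm
      _ ≤ (1 / (N : ℝ)) * ∑ v : Fin N, ∑ k ∈ Finset.range (r + 1),
          (RegGraphs N p).card * (M * c) / D :=
          mul_le_mul_of_nonneg_left (Finset.sum_le_sum fun v _ => Finset.sum_le_sum (hsw v))
            (by positivity)
      _ = ((1 / (N : ℝ)) * N) * (((r + 1) * (M * c) / D) * (RegGraphs N p).card) := by
          simp only [Finset.sum_const, Finset.card_univ, Fintype.card_fin, Finset.card_range,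
            nsmul_eq_mul]
          push_cast
          ring
      _ ≤ 1 * (((r + 1) * (M * c) / D) * (RegGraphs N p).card) := by
          refine mul_le_mul_of_nonneg_right ?_ (by positivity)
          rw [one_div]
          exact inv_mul_le_one
      _ = _ := one_mul _
  exact div_le_of_le_mul₀ (Nat.cast_nonneg _) (by positivity) hsum

/-- On the scale `r = ⌊(1-ε) log_{p-1} N⌋` one has `(p-1)^r ≤ N^{1-ε}`, so that `r² (p-1)^r` is
negligible against `N`. -/
lemma tendsto_scale (p : ℕ) (hp : 3 ≤ p) (ε : ℝ) (hε0 : 0 < ε) (hε1 : ε < 1) :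
    Tendsto (fun N : ℕ =>
      ((⌊(1 - ε) * Real.log N / Real.log ((p : ℝ) - 1)⌋₊ : ℝ) + 1) ^ 2 *
        ((p : ℝ) - 1) ^ ⌊(1 - ε) * Real.log N / Real.log ((p : ℝ) - 1)⌋₊ / N) atTop (nhds 0) := by
  have hp3 : (3 : ℝ) ≤ p := by exact_mod_cast hp
  have hl : 0 < Real.log ((p : ℝ) - 1) := Real.log_pos (by linarith)
  set K : ℝ := (1 - ε) / Real.log ((p : ℝ) - 1) with hK
  have h1 : Tendsto (fun x : ℝ => (K * Real.log x + 1) * x ^ (-(ε / 2))) atTop (nhds 0) := by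
    have ha : Tendsto (fun x : ℝ => Real.log x / x ^ (ε / 2)) atTop (nhds 0) :=
      (isLittleO_log_rpow_atTop (by linarith)).tendsto_div_nhds_zero
    have hb : Tendsto (fun x : ℝ => x ^ (-(ε / 2))) atTop (nhds 0) :=
      tendsto_rpow_neg_atTop (by linarith)
    have hab := (ha.const_mul K).add hb
    rw [mul_zero, add_zero] at hab
    refine hab.congr' ?_
    filter_upwards [eventually_gt_atTop 0] with x hx
    rw [Real.rpow_neg hx.le]
    ring
  have h2 := ((h1.pow 2).comp tendsto_natCast_atTop_atTop :
    Tendsto (fun N : ℕ => ((K * Real.log N + 1) * (N : ℝ) ^ (-(ε / 2))) ^ 2) atTop _)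
  rw [zero_pow two_ne_zero] at h2
  refine squeeze_zero' ?_ ?_ h2
  · refine Eventually.of_forall fun N => ?_
    have : 0 ≤ (p : ℝ) - 1 := by linarith
    positivity
  · filter_upwards [eventually_ge_atTop 1] with N hN
    have hN1 : (1 : ℝ) ≤ N := by exact_mod_cast hN
    have hN0 : (0 : ℝ) < N := by linarith
    have hlog : 0 ≤ Real.log N := Real.log_nonneg hN1
    set t : ℝ := (1 - ε) * Real.log N / Real.log ((p : ℝ) - 1) with ht
    have ht0 : 0 ≤ t := div_nonneg (mul_nonneg (by linarith) hlog) hl.le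
    have hr : (⌊t⌋₊ : ℝ) ≤ t := Nat.floor_le ht0
    have htK : t = K * Real.log N := by
      rw [ht, hK]
      ring
    have hpow : ((p : ℝ) - 1) ^ ⌊t⌋₊ ≤ (N : ℝ) ^ (1 - ε) := by
      rw [← Real.rpow_natCast]
      refine (Real.rpow_le_rpow_of_exponent_le (by linarith) hr).trans (le_of_eq ?_)
      rw [Real.rpow_def_of_pos (by linarith), Real.rpow_def_of_pos hN0, ht]
      congr 1
      field_simp
    have hsq : ((⌊t⌋₊ : ℝ) + 1) ^ 2 ≤ (K * Real.log N + 1) ^ 2 := by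
      rw [← htK]
      gcongr
    calc ((⌊t⌋₊ : ℝ) + 1) ^ 2 * ((p : ℝ) - 1) ^ ⌊t⌋₊ / N
        ≤ (K * Real.log N + 1) ^ 2 * (N : ℝ) ^ (1 - ε) / N := by
          refine div_le_div_of_nonneg_right ?_ hN0.le
          refine mul_le_mul hsq hpow (pow_nonneg (by linarith) _) (sq_nonneg _)
      _ = ((K * Real.log N + 1) * (N : ℝ) ^ (-(ε / 2))) ^ 2 := by
          rw [mul_pow, mul_div_assoc, ← Real.rpow_natCast ((N : ℝ) ^ (-(ε / 2))),
            ← Real.rpow_mul hN0.le]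
          congr 1
          rw [← Real.rpow_sub_one hN0.ne']
          congr 1
          push_cast
          ring

/-- For `p ≥ 3` and `ε ∈ (0,1)`, on the scale `f(N) = ⌊(1−ε)·ln N / ln(p−1)⌋`, the
expected averaged density of independent cycles in `f(N)`-balls of the uniform random
`p`-regular graph on `N` vertices tends to `0` along `N` with `p·N` even and `R_{N,p}`
nonempty. -/
theorem cycle_exponent_vanishes (p : ℕ) (hp : 3 ≤ p) (ε : ℝ) (hε0 : 0 < ε)
    (hε1 : ε < 1) :
    Tendsto (fun N : ℕ =>
        regExpectation N p (fun G =>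
          (1 / (N : ℝ)) * ∑ v : Fin N,
            ballCycleNumber G v ⌊(1 - ε) * Real.log N / Real.log ((p : ℝ) - 1)⌋₊ /
              ({u | InBall G v ⌊(1 - ε) * Real.log N / Real.log ((p : ℝ) - 1)⌋₊ u}.ncard : ℝ)))
      (atTop ⊓ Filter.principal {N : ℕ | Even (p * N) ∧ (RegGraphs N p).Nonempty})
      (nhds 0) := by
  refine Tendsto.mono_left ?_ inf_le_left
  set r : ℕ → ℕ := fun N => ⌊(1 - ε) * Real.log N / Real.log ((p : ℝ) - 1)⌋₊ with hr
  have ha : Tendsto (fun N : ℕ => ((r N : ℝ) + 1) ^ 2 * ((p : ℝ) - 1) ^ r N / N) atTop (nhds 0) :=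
    tendsto_scale p hp ε hε0 hε1
  set a : ℕ → ℝ := fun N => ((r N : ℝ) + 1) ^ 2 * ((p : ℝ) - 1) ^ r N / N with hadef
  have hp3 : (3 : ℝ) ≤ p := by exact_mod_cast hp
  have hden : Tendsto (fun N : ℕ => (p : ℝ) - 2 * p ^ 2 * a N - 2 * p * (p + 1) / (N : ℝ)) atTop
      (nhds (p : ℝ)) := by
    have h := (ha.const_mul (2 * (p : ℝ) ^ 2)).const_sub (p : ℝ)
    have h' := h.sub (tendsto_const_div_atTop_nhds_zero_nat (2 * (p : ℝ) * (p + 1)))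
    simpa using h'
  have hbound : Tendsto (fun N : ℕ => (p * ((p + 1) * (p : ℝ) ^ 2)) * a N /
      ((p : ℝ) - 2 * p ^ 2 * a N - 2 * p * (p + 1) / (N : ℝ))) atTop (nhds 0) := by
    have h := (ha.const_mul (p * ((p + 1) * (p : ℝ) ^ 2))).div hden (by linarith)
    rw [mul_zero, zero_div] at h
    exact h
  refine squeeze_zero' (Eventually.of_forall fun N => regExpectation_nonneg p (r N)) ?_ hbound
  filter_upwards [eventually_ge_atTop 1, hden.eventually (lt_mem_nhds (show (0 : ℝ) < p by linarith))]
    with N hN hpos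
  have hN0 : (0 : ℝ) < N := by exact_mod_cast hN
  set M : ℝ := ((r N : ℝ) + 1) * (p * ((p : ℝ) - 1) ^ r N) with hM
  have hM0 : 0 ≤ M := by
    have : 0 ≤ (p : ℝ) - 1 := by linarith
    positivity
  have haM : ((r N : ℝ) + 1) * M = p * a N * N := by
    rw [hM, hadef]
    field_simp
  have hMle : M ≤ p * a N * N := by
    rw [← haM]
    exact le_mul_of_one_le_left hM0 (by linarith [(Nat.cast_nonneg (r N) : (0 : ℝ) ≤ r N)])
  have hD : N * ((p : ℝ) - 2 * p ^ 2 * a N - 2 * p * (p + 1) / (N : ℝ)) ≤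
      N * p - 2 * ((M + p + 1) * p) := by
    have h1 : N * ((p : ℝ) - 2 * p ^ 2 * a N - 2 * p * (p + 1) / (N : ℝ)) =
        N * p - 2 * ((p * a N * N + p + 1) * p) := by
      field_simp
      ring
    rw [h1]
    have := mul_le_mul_of_nonneg_right hMle (show (0 : ℝ) ≤ p by linarith)
    linarith
  have hNpos := mul_pos hN0 hpos
  refine (regExpectation_le hp M hM (hNpos.trans_le hD)).trans ?_
  have hnum : ((r N : ℝ) + 1) * (M * ((p + 1) * (p : ℝ) ^ 2)) =
      N * ((p * ((p + 1) * (p : ℝ) ^ 2)) * a N) := by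
    rw [← mul_assoc, haM]
    ring
  rw [← mul_div_mul_left (p * ((p + 1) * (p : ℝ) ^ 2) * a N) _ hN0.ne', ← hnum]
  exact div_le_div_of_nonneg_left (by positivity) hNpos hD
end

section
/- Let V be the complex vector space with basis (ν_k)_{k≥1}, and for each n ∈ ℤ define the linear operator D_n on V by: D_n ν_k = k·ν_{k+n} if n ≥ 0; D_n ν_k = (k+n+1)·ν_{k+n} if n < 0 and k+n ≥ 1; and D_n ν_k = 0 if n < 0 and k+n ≤ 0. Then for all m, n ∈ ℤ there exist an integer K ≥ 1 and a constant γ = γ(m,n) ∈ ℤ such that for all k ≥ K: (D_n D_m − D_m D_n) ν_k = ((m−n)·k + γ)·ν_{k+m+n}. In particular, writing D_{n+m} ν_k = d_k·ν_{k+n+m}, the ratio of the commutator coefficient to d_k tends to m − n as k → ∞, i.e., (D_n D_m − D_m D_n) ν_k = (m − n + o(1))·D_{n+m} ν_k. -/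
/-!
For `k + n ≥ 1` the coefficient of `D_n` on `ν_k` is `k + c_n`, where `c_n = 0` if `n ≥ 0` and
`c_n = n + 1` if `n < 0` (`coeffD_eq_add_shiftD`). Hence for large `k` the commutator
coefficient is
`(k + c_m) (k + m + c_n) - (k + c_n) (k + n + c_m) = (m - n) k + (m c_m - n c_n)`:
the quadratic terms cancel, and `γ = m c_m - n c_n`. Dividing by `d_k = k + c_{n+m}`
gives the limit `m - n` (`tendsto_affine_div_affine`).
-/

open Filter

/-- The basis vectors `ν_k` of the grammar space (here realized inside `ℤ →₀ ℂ`;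
only `ν_k` for `k ≥ 1` are used). -/
noncomputable def ν (k : ℤ) : ℤ →₀ ℂ := Finsupp.single k 1

/-- The coefficient of `D_n` on `ν_k` (for `k ≥ 1`): `D_n ν_k = coeffD n k · ν_{k+n}`,
namely `k` if `n ≥ 0`, `k+n+1` if `n < 0` and `k+n ≥ 1`, and `0` if `n < 0` and
`k+n ≤ 0`. -/
def coeffD (n k : ℤ) : ℤ :=
  if 0 ≤ n then k else if 1 ≤ k + n then k + n + 1 else 0

/-- The constant term of the coefficient of `D_n`, once `k` is large enough for the
vanishing case not to occur. -/
def shiftD (n : ℤ) : ℤ := if 0 ≤ n then 0 else n + 1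

lemma coeffD_eq_add_shiftD {n k : ℤ} (h : 1 ≤ k + n) : coeffD n k = k + shiftD n := by
  unfold coeffD shiftD
  split_ifs <;> omega

/-- A ratio of two affine functions, the denominator having slope one, tends to the slope
of the numerator. -/
lemma tendsto_affine_div_affine (a g c : ℝ) :
    Tendsto (fun k : ℕ => (a * (k : ℝ) + g) / ((k : ℝ) + c)) atTop (nhds a) := by
  have hden : Tendsto (fun k : ℕ => (k : ℝ) + c) atTop atTop :=
    tendsto_atTop_add_const_right _ c tendsto_natCast_atTop_atTop
  have hrem : Tendsto (fun k : ℕ => a + (g - a * c) / ((k : ℝ) + c)) atTop (nhds a) := by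
    simpa using (hden.const_div_atTop (g - a * c)).const_add a
  refine hrem.congr' ?_
  filter_upwards [hden.eventually_gt_atTop 0] with k hk
  field_simp
  ring

/-- Asymptotic representation of the Lie algebra of diffeomorphisms of the circle by
quantum grammar Hamiltonians: for all `m, n` there are `K ≥ 1` and `γ = γ(m,n) ∈ ℤ`
with `(D_n D_m − D_m D_n) ν_k = ((m−n)·k + γ)·ν_{k+m+n}` for all `k ≥ K`; in
particular, writing `D_{n+m} ν_k = d_k ν_{k+n+m}`, the ratio of the commutator
coefficient to `d_k` tends to `m − n`, i.e.
`(D_n D_m − D_m D_n) ν_k = (m − n + o(1))·D_{n+m} ν_k`. -/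
theorem asymptotic_diffeomorphism_representation
    (D : ℤ → ((ℤ →₀ ℂ) →ₗ[ℂ] (ℤ →₀ ℂ)))
    (hD : ∀ n k : ℤ, 1 ≤ k → D n (ν k) = (coeffD n k : ℂ) • ν (k + n)) :
    ∀ m n : ℤ, ∃ K γ : ℤ, 1 ≤ K ∧
      (∀ k : ℤ, K ≤ k →
        D n (D m (ν k)) - D m (D n (ν k)) =
          (((m - n) * k + γ : ℤ) : ℂ) • ν (k + m + n)) ∧
      Tendsto (fun k : ℕ =>
          (((m - n) * (k : ℤ) + γ : ℤ) : ℝ) / ((coeffD (n + m) (k : ℤ) : ℤ) : ℝ))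
        atTop (nhds ((m : ℝ) - (n : ℝ))) := by
  intro m n
  -- The bound `K` keeps `k`, `k + m`, `k + n` and `k + m + n` all at least `1`.
  refine ⟨1 + |m| + |n|, m * shiftD m - n * shiftD n, ?_, ?_, ?_⟩
  · have := abs_nonneg m
    have := abs_nonneg n
    omega
  · intro k hk
    have hm := neg_abs_le m
    have hn := neg_abs_le n
    have hm0 := abs_nonneg m
    have hn0 := abs_nonneg n
    rw [hD m k (by omega), hD n k (by omega), map_smul, map_smul,
      hD n (k + m) (by omega), hD m (k + n) (by omega), add_right_comm k n m,
      smul_smul, smul_smul, ← sub_smul,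
      coeffD_eq_add_shiftD (n := m) (k := k) (by omega),
      coeffD_eq_add_shiftD (n := n) (k := k) (by omega),
      coeffD_eq_add_shiftD (n := n) (k := k + m) (by omega),
      coeffD_eq_add_shiftD (n := m) (k := k + n) (by omega)]
    congr 1
    push_cast
    ring
  · have hlim := tendsto_affine_div_affine ((m : ℝ) - n)
      ((m * shiftD m - n * shiftD n : ℤ) : ℝ) (shiftD (n + m) : ℝ)
    refine hlim.congr' ?_
    filter_upwards [eventually_ge_atTop (1 + |n + m|).toNat] with k hk
    have hnm := neg_abs_le (n + m)
    rw [coeffD_eq_add_shiftD (by omega)]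
    push_cast
    rfl
end
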